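/- arXiv:1412.7174 — 7 statements merged into one kernel-verified Lean document; each statement's English description precedes it below -/
import Mathlib

section
/- Let (p_i, ρ_i)_{i=1}^m be an ensemble of states on ℂ^n. Suppose that every m-element POVM maximizing the success probability P_s = ∑_{i=1}^m p_i Tr(ρ_i Π_i) is a projective measurement. Then there is exactly one m-element POVM maximizing P_s. -/
open Matrix
open scoped ComplexOrder

noncomputable section

/-- Rank-one outer product `x x*` as an `n × n` complex matrix. -/
def outer {n : ℕ} (x : Fin n → ℂ) : Matrix (Fin n) (Fin n) ℂ :=
  Matrix.vecMulVec x (star x)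

/-- A POVM indexed by `ι`: positive semidefinite elements summing to the identity. -/
def IsPOVM {ι : Type} [Fintype ι] {n : ℕ} (E : ι → Matrix (Fin n) (Fin n) ℂ) : Prop :=
  (∀ i, (E i).PosSemidef) ∧ ∑ i, E i = 1

/-- Success probability of the POVM `E` for the ensemble `(p, ρ)`. -/
def succProb {ι : Type} [Fintype ι] {n : ℕ} (p : ι → ℝ)
    (ρ E : ι → Matrix (Fin n) (Fin n) ℂ) : ℝ :=
  ∑ i, p i * ((ρ i * E i).trace).re

/-- `P` is a POVM maximizing the success probability for the ensemble `(p, ρ)`. -/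
def IsOptimal {ι : Type} [Fintype ι] {n : ℕ} (p : ι → ℝ)
    (ρ P : ι → Matrix (Fin n) (Fin n) ℂ) : Prop :=
  IsPOVM P ∧ ∀ E, IsPOVM E → succProb p ρ E ≤ succProb p ρ P

/-- An ensemble of states: positive probabilities summing to 1, states positive
semidefinite of trace 1. -/
def IsEnsemble {ι : Type} [Fintype ι] {n : ℕ} (p : ι → ℝ)
    (ρ : ι → Matrix (Fin n) (Fin n) ℂ) : Prop :=
  (∀ i, 0 < p i) ∧ ∑ i, p i = 1 ∧ (∀ i, (ρ i).PosSemidef) ∧ ∀ i, (ρ i).trace = 1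

/-- A linearly independent (LI) ensemble: the ranks sum to `n` and the column spaces
of the states together span `ℂ^n`. -/
def IsLIEnsemble {ι : Type} [Fintype ι] {n : ℕ} (p : ι → ℝ)
    (ρ : ι → Matrix (Fin n) (Fin n) ℂ) : Prop :=
  IsEnsemble p ρ ∧ (∑ i, (ρ i).rank = n) ∧
    (⨆ i, LinearMap.range (ρ i).mulVecLin) = ⊤

/-- A projective measurement: mutually orthogonal Hermitian idempotents summing to
the identity. -/
def IsProjectiveMeasurement {ι : Type} [Fintype ι] {n : ℕ}
    (P : ι → Matrix (Fin n) (Fin n) ℂ) : Prop :=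
  (∀ i j, i ≠ j → P i * P j = 0) ∧ (∀ i, P i * P i = P i) ∧
    (∀ i, (P i).IsHermitian) ∧ ∑ i, P i = 1

/-- The pretty good measurement of the ensemble `(q, σ)` (with elements
`S^{-1/2} qᵢσᵢ S^{-1/2}`, `S = ∑ qⱼσⱼ`, `S^{1/2}` the unique positive definite square
root of `S`) is an optimal POVM for the minimum error discrimination of `(p, ρ)`. -/
def PGMIsOptimal {m n : ℕ} (q : Fin m → ℝ) (σ : Fin m → Matrix (Fin n) (Fin n) ℂ)
    (p : Fin m → ℝ) (ρ : Fin m → Matrix (Fin n) (Fin n) ℂ) : Prop :=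
  ∀ R : Matrix (Fin n) (Fin n) ℂ, R.PosDef → R * R = ∑ j, (q j : ℂ) • σ j →
    IsOptimal p ρ (fun i => R⁻¹ * ((q i : ℂ) • σ i) * R⁻¹)

/-!
A linear functional attains its maximum over the compact convex set of POVMs on an exposed face,
which is convex and nonempty. If two self-adjoint idempotents `P`, `Q` have an idempotent midpoint,
then `(P - Q)² = 2 (P² + Q²) - (P + Q)² = 0`, and self-adjointness of `P - Q` forces `P = Q`. Hence
a convex set of projective measurements, such as the face of optimal POVMs, has at most one point.
-/

lemma sub_mul_self_eq_zero_of_isIdempotentElem_midpoint {R A : Type*} [Ring R]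
    [Invertible (2 : R)] [NonUnitalRing A] [Module R A] {P Q : A}
    (hP : IsIdempotentElem P) (hQ : IsIdempotentElem Q) (hM : IsIdempotentElem (midpoint R P Q)) :
    (P - Q) * (P - Q) = 0 := by
  have h_add : (P + Q) * (P + Q) = P + Q + (P + Q) := by
    rw [← midpoint_add_self R P Q]
    simp only [mul_add, add_mul, hM.eq]
  calc (P - Q) * (P - Q) = P * P + P * P + (Q * Q + Q * Q) - (P + Q) * (P + Q) := by
        simp only [mul_sub, sub_mul, mul_add, add_mul]; abel
    _ = 0 := by rw [h_add, hP.eq, hQ.eq]; abel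

lemma subsingleton_of_convex_of_isStarProjection {A : Type*} [NonUnitalNormedRing A] [StarRing A]
    [CStarRing A] [Module ℝ A] {S : Set A} (hS : Convex ℝ S)
    (hproj : ∀ P ∈ S, IsStarProjection P) : S.Subsingleton := by
  intro P hP Q hQ
  have hsq : (P - Q) * (P - Q) = 0 :=
    sub_mul_self_eq_zero_of_isIdempotentElem_midpoint (R := ℝ) (hproj P hP).isIdempotentElem
      (hproj Q hQ).isIdempotentElem (hproj _ (hS.midpoint_mem hP hQ)).isIdempotentElem
  have hsa : IsSelfAdjoint (P - Q) := (hproj P hP).isSelfAdjoint.sub (hproj Q hQ).isSelfAdjoint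
  rw [← sub_eq_zero, ← CStarRing.star_mul_self_eq_zero_iff, hsa.star_eq, hsq]

section PovmSet

variable (ι A : Type*) [Fintype ι]

/-- The POVMs indexed by `ι` with values in an ordered algebra `A`: positive families that
sum to `1`. For `A = Matrix (Fin n) (Fin n) ℂ` with the Loewner order this is `IsPOVM`. -/
def povmSet [AddCommMonoid A] [LE A] [One A] : Set (ι → A) :=
  {E | 0 ≤ E ∧ ∑ i, E i = 1}

lemma povmSet_nonempty [AddCommMonoidWithOne A] [Preorder A] [ZeroLEOneClass A]
    [Nonempty ι] : (povmSet ι A).Nonempty := by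
  classical
  exact ⟨Pi.single (Classical.arbitrary ι) 1, Pi.single_nonneg.2 zero_le_one, by simp⟩

lemma convex_povmSet [AddCommGroupWithOne A] [PartialOrder A] [IsOrderedAddMonoid A]
    [Module ℝ A] [PosSMulMono ℝ A] : Convex ℝ (povmSet ι A) := by
  have hsum : IsLinearMap ℝ fun E : ι → A => ∑ i, E i :=
    ⟨fun _ _ => Finset.sum_add_distrib, fun _ _ => by simp only [Pi.smul_apply, Finset.smul_sum]⟩
  exact (convex_Ici 0).inter ((convex_singleton 1).is_linear_preimage hsum)

lemma isCompact_povmSet [CStarAlgebra A] [PartialOrder A] [StarOrderedRing A]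
    [ProperSpace A] : IsCompact (povmSet ι A) := by
  have hclosed : IsClosed (povmSet ι A) :=
    isClosed_Ici.inter (isClosed_eq (by fun_prop) continuous_const)
  refine (isCompact_closedBall (0 : ι → A) 1).of_isClosed_subset hclosed ?_
  rintro E ⟨hnonneg, hsum⟩
  refine mem_closedBall_zero_iff.2 ((pi_norm_le_iff_of_nonneg zero_le_one).2 fun i => ?_)
  have hle : E i ≤ 1 := hsum ▸ Finset.single_le_sum (fun j _ => hnonneg j) (Finset.mem_univ i)
  exact (CStarAlgebra.norm_le_one_iff_of_nonneg (E i) (hnonneg i)).2 hle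

end PovmSet

section Ensemble

variable {ι : Type} [Fintype ι] {n : ℕ}

open scoped MatrixOrder Matrix.Norms.L2Operator

lemma IsEnsemble.nonempty {p : ι → ℝ} {ρ : ι → Matrix (Fin n) (Fin n) ℂ}
    (h : IsEnsemble p ρ) : Nonempty ι := by
  by_contra hempty
  rw [not_nonempty_iff] at hempty
  simpa using h.2.1

lemma mem_povmSet_iff_isPOVM {E : ι → Matrix (Fin n) (Fin n) ℂ} :
    E ∈ povmSet ι (Matrix (Fin n) (Fin n) ℂ) ↔ IsPOVM E := by
  simp only [povmSet, IsPOVM, Pi.le_def, Pi.zero_apply, Matrix.nonneg_iff_posSemidef,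
    Set.mem_ofPred_eq]

variable (p : ι → ℝ) (ρ : ι → Matrix (Fin n) (Fin n) ℂ)

/-- The success probability, as a continuous real-linear functional of the POVM. -/
def succProbDual : StrongDual ℝ (ι → Matrix (Fin n) (Fin n) ℂ) where
  toFun := succProb p ρ
  map_add' E F := by
    simp only [succProb, Pi.add_apply, mul_add, Matrix.trace_add, Complex.add_re,
      Finset.sum_add_distrib]
  map_smul' c E := by
    simp only [succProb, Pi.smul_apply, Matrix.mul_smul, Matrix.trace_smul, Complex.smul_re,
      smul_eq_mul, mul_left_comm _ c, Finset.mul_sum, RingHom.id_apply]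
  cont := by unfold succProb; fun_prop

lemma setOf_isOptimal_eq_toExposed :
    {P | IsOptimal p ρ P} =
      (succProbDual p ρ).toExposed (povmSet ι (Matrix (Fin n) (Fin n) ℂ)) := by
  ext P
  simp only [ContinuousLinearMap.toExposed, mem_povmSet_iff_isPOVM]
  rfl

lemma exists_isOptimal [Nonempty ι] : ∃ P, IsOptimal p ρ P := by
  obtain ⟨P, hP, hmax⟩ := (isCompact_povmSet ι (Matrix (Fin n) (Fin n) ℂ)).exists_isMaxOn
    (povmSet_nonempty ι _) (succProbDual p ρ).continuous.continuousOn
  exact ⟨P, mem_povmSet_iff_isPOVM.1 hP, fun E hE => hmax (mem_povmSet_iff_isPOVM.2 hE)⟩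

lemma convex_setOf_isOptimal : Convex ℝ {P | IsOptimal p ρ P} := by
  rw [setOf_isOptimal_eq_toExposed]
  exact ContinuousLinearMap.toExposed.isExposed.convex (convex_povmSet ι _)

theorem stmt_1_general [Nonempty ι]
    (hidem : ∀ P, IsOptimal p ρ P → ∀ i, IsIdempotentElem (P i)) :
    ∃! P, IsOptimal p ρ P := by
  have hproj : ∀ P ∈ {P | IsOptimal p ρ P}, IsStarProjection P := fun P hP =>
    ⟨funext (hidem P hP), funext fun i => (hP.1.1 i).isHermitian⟩
  obtain ⟨P, hP⟩ := exists_isOptimal p ρ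
  have hsub := subsingleton_of_convex_of_isStarProjection (convex_setOf_isOptimal p ρ) hproj
  exact ⟨P, hP, fun Q hQ => hsub hQ hP⟩

end Ensemble

/-- If every optimal POVM for the ensemble is a projective measurement, then there is
exactly one optimal POVM. -/
theorem stmt_1 {m n : ℕ} (p : Fin m → ℝ) (ρ : Fin m → Matrix (Fin n) (Fin n) ℂ)
    (hens : IsEnsemble p ρ)
    (hproj : ∀ P : Fin m → Matrix (Fin n) (Fin n) ℂ,
      IsOptimal p ρ P → IsProjectiveMeasurement P) :
    ∃! P : Fin m → Matrix (Fin n) (Fin n) ℂ, IsOptimal p ρ P := by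
  have := hens.nonempty
  exact stmt_1_general p ρ fun P hP => (hproj P hP).2.1
end
end

section
/- Let p_1,…,p_m > 0, let ρ_1,…,ρ_m be n×n complex positive semidefinite matrices with rank ρ_i = r_i, and let (Π_i)_{i=1}^m be a projective measurement on ℂ^n with rank Π_i = r_i for every i (so r_1+⋯+r_m = n). If Z = ∑_{k=1}^m p_k ρ_k Π_k is positive definite, then rank(ρ_i Π_i) = r_i for every i. -/
open Matrix
open scoped ComplexOrder

noncomputable section

/-!
Multiplying `Z = ∑ pₖρₖΠₖ` on the right by `Πᵢ` leaves `ZΠᵢ = pᵢρᵢΠᵢ`. As `Z` is invertible,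
`rank Πᵢ = rank (ZΠᵢ) ≤ rank (ρᵢΠᵢ) ≤ rank Πᵢ`.
-/

theorem IsProjectiveMeasurement.orthogonalIdempotents {ι : Type} [Fintype ι] {n : ℕ}
    {P : ι → Matrix (Fin n) (Fin n) ℂ} (hP : IsProjectiveMeasurement P) :
    OrthogonalIdempotents P where
  idem := hP.2.1
  ortho := hP.1

theorem sum_mul_mul_of_orthogonalIdempotents {S ι : Type*} [Semiring S] [Fintype ι] {e : ι → S}
    (he : OrthogonalIdempotents e) (a : ι → S) (i : ι) :
    (∑ k, a k * e k) * e i = a i * e i := by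
  classical
  simp [Finset.sum_mul, mul_assoc, he.mul_eq]

theorem matrix_rank_smul_le {R m n : Type*} [CommRing R] [Fintype n]
    (c : R) (B : Matrix m n R) : (c • B).rank ≤ B.rank := by
  classical
  nontriviality R
  rw [smul_eq_mul_diagonal]
  exact rank_mul_le_left _ _

open scoped nonZeroDivisors in
theorem stmt_4_general {R ι n : Type*} [CommRing R] [Fintype ι] [Fintype n] [DecidableEq n]
    (c : ι → R) (A : ι → Matrix n n R) {P : ι → Matrix n n R} (hP : OrthogonalIdempotents P)
    (hdet : (∑ k, c k • (A k * P k)).det ∈ R⁰) (i : ι) :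
    (A i * P i).rank = (P i).rank := by
  nontriviality R
  refine le_antisymm (rank_mul_le_right _ _) ?_
  have compress : (∑ k, c k • (A k * P k)) * P i = c i • (A i * P i) := by
    simpa only [smul_mul_assoc] using
      sum_mul_mul_of_orthogonalIdempotents hP (fun k => c k • A k) i
  calc
    (P i).rank = ((∑ k, c k • (A k * P k)) * P i).rank :=
      (rank_mul_eq_right_of_det_mem_nonZeroDivisors _ _ hdet).symm
    _ = (c i • (A i * P i)).rank := by rw [compress]
    _ ≤ (A i * P i).rank := matrix_rank_smul_le _ _

/-- If `Z = ∑ pₖρₖΠₖ` is positive definite, then `rank (ρᵢΠᵢ) = rᵢ` for every `i`. -/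
theorem stmt_4 {m n : ℕ} (p : Fin m → ℝ) (hp : ∀ i, 0 < p i)
    (ρ : Fin m → Matrix (Fin n) (Fin n) ℂ) (hρ : ∀ i, (ρ i).PosSemidef)
    (P : Fin m → Matrix (Fin n) (Fin n) ℂ) (hP : IsProjectiveMeasurement P)
    (hrank : ∀ i, (P i).rank = (ρ i).rank)
    (hsum : ∑ i, (ρ i).rank = n)
    (Z : Matrix (Fin n) (Fin n) ℂ) (hZ : Z = ∑ k, (p k : ℂ) • (ρ k * P k))
    (hpos : Z.PosDef) :
    ∀ i, (ρ i * P i).rank = (ρ i).rank := by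
  subst hZ
  have hdet := mem_nonZeroDivisors_of_ne_zero hpos.det_pos.ne'
  exact fun i => (stmt_4_general _ ρ hP.orthogonalIdempotents hdet i).trans (hrank i)
end
end

section
/- Let M be a Hermitian positive definite (k+l)×(k+l) complex matrix written in block form M = [[A, B],[B*, C]] with A the k×k upper-left block (so A is positive definite, hence invertible). Then M⁻¹ − [[A⁻¹, 0],[0, 0]] is positive semidefinite, where [[A⁻¹, 0],[0, 0]] denotes the (k+l)×(k+l) block matrix with A⁻¹ in the upper-left k×k block and zeros elsewhere. -/
open Matrix
open scoped ComplexOrder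

noncomputable section

/-! The corner matrix `N = [[A⁻¹, 0], [0, 0]]` satisfies `N * M * N = N`. Hence
`(M⁻¹ - N) * M * (M⁻¹ - N) = M⁻¹ - N`, and since `M⁻¹ - N` is Hermitian, this exhibits it as
`X * M * Xᴴ` with `X = M⁻¹ - N`. -/

section Sandwich

variable {n R : Type*} [Fintype n] [DecidableEq n] [CommRing R] {M N : Matrix n n R}

theorem inv_sub_mul_mul_inv_sub (hM : IsUnit M) (hN : N * M * N = N) :
    (M⁻¹ - N) * M * (M⁻¹ - N) = M⁻¹ - N := by
  have hdet : IsUnit M.det := (isUnit_iff_isUnit_det M).mp hM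
  calc (M⁻¹ - N) * M * (M⁻¹ - N)
      = (1 - N * M) * (M⁻¹ - N) := by rw [sub_mul, nonsing_inv_mul M hdet]
    _ = M⁻¹ - N - (N * M * M⁻¹ - N * M * N) := by rw [sub_mul, one_mul, mul_sub]
    _ = M⁻¹ - N := by rw [mul_nonsing_inv_cancel_right M N hdet, hN, sub_self, sub_zero]

theorem posSemidef_inv_sub_of_mul_mul_self_eq [PartialOrder R] [StarRing R]
    (hM : M.PosSemidef) (hMunit : IsUnit M) (hNherm : N.IsHermitian) (hN : N * M * N = N) :
    (M⁻¹ - N).PosSemidef := by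
  have hherm : (M⁻¹ - N)ᴴ = M⁻¹ - N := (hM.isHermitian.inv.sub hNherm).eq
  have hsandwich := hM.mul_mul_conjTranspose_same (M⁻¹ - N)
  rwa [hherm, inv_sub_mul_mul_inv_sub hMunit hN] at hsandwich

end Sandwich

section Blocks

variable {m n R : Type*}

theorem fromBlocks_corner_mul_mul_corner [Fintype m] [Fintype n] [NonUnitalSemiring R]
    (G H A : Matrix m m R) (B : Matrix m n R) (C : Matrix n m R) (D : Matrix n n R) :
    fromBlocks G 0 0 (0 : Matrix n n R) * fromBlocks A B C D * fromBlocks H 0 0 0 =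
      fromBlocks (G * A * H) 0 0 0 := by
  simp [fromBlocks_multiply]

theorem posDef_of_fromBlocks₁₁ [Ring R] [PartialOrder R] [StarRing R]
    {A : Matrix m m R} {B : Matrix m n R} {C : Matrix n m R} {D : Matrix n n R}
    (h : (fromBlocks A B C D).PosDef) : A.PosDef :=
  h.submatrix Sum.inl_injective

end Blocks

theorem stmt_6_general {m n K : Type*} [Fintype m] [Fintype n] [DecidableEq m] [DecidableEq n]
    [Field K] [PartialOrder K] [StarRing K]
    (A : Matrix m m K) (B : Matrix m n K) (C : Matrix n n K)
    (hM : (fromBlocks A B Bᴴ C).PosDef) :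
    ((fromBlocks A B Bᴴ C)⁻¹ - fromBlocks A⁻¹ 0 0 0).PosSemidef := by
  have hA : A.PosDef := posDef_of_fromBlocks₁₁ hM
  have hAdet : IsUnit A.det := (isUnit_iff_isUnit_det A).mp hA.isUnit
  apply posSemidef_inv_sub_of_mul_mul_self_eq hM.posSemidef hM.isUnit
  · exact hA.isHermitian.inv.fromBlocks conjTranspose_zero isHermitian_zero
  · rw [fromBlocks_corner_mul_mul_corner, nonsing_inv_mul A hAdet, one_mul]

/-- For a positive definite block matrix `M = [[A, B], [B*, C]]`,
`M⁻¹ - [[A⁻¹, 0], [0, 0]]` is positive semidefinite. -/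
theorem stmt_6 {k l : ℕ} (A : Matrix (Fin k) (Fin k) ℂ) (B : Matrix (Fin k) (Fin l) ℂ)
    (C : Matrix (Fin l) (Fin l) ℂ)
    (hM : (Matrix.fromBlocks A B Bᴴ C).PosDef) :
    ((Matrix.fromBlocks A B Bᴴ C)⁻¹ - Matrix.fromBlocks A⁻¹ 0 0 0).PosSemidef :=
  stmt_6_general A B C hM
end
end

section
/- Let (p_i, ρ_i)_{i=1}^m be a linearly independent (LI) ensemble on ℂ^n and let (Π_i) be an m-element POVM. Set Z = ∑_{k=1}^m p_k ρ_k Π_k. If (Z − p_iρ_i)Π_i = 0 and Π_i(Z − p_iρ_i) = 0 for all i, and Z is positive definite, then (Π_i) is optimal: for every m-element POVM (E_i), ∑_{i=1}^m p_i Tr(ρ_i E_i) ≤ ∑_{i=1}^m p_i Tr(ρ_i Π_i). -/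
open Matrix
open scoped ComplexOrder

noncomputable section

/-!
The operator `Z` is dual feasible, and this is all that optimality needs: if `Wᵢ = pᵢρᵢ ≤ Z` for
every `i`, then `∑ tr (Wᵢ Eᵢ) ≤ ∑ tr (Z Eᵢ) = tr Z = ∑ tr (Wᵢ Πᵢ)`.

Feasibility comes from counting ranks. Since `Z` is invertible and `Z Πᵢ = Wᵢ Πᵢ`, one has
`rank Πᵢ = rank (Wᵢ Πᵢ) ≤ rank Wᵢ`, while `n = rank (∑ Πᵢ) ≤ ∑ rank Πᵢ ≤ ∑ rank Wᵢ = n`. So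
`Wᵢ Πᵢ` has the same range as `Wᵢ`, and `Wᵢ = Wᵢ Q` for some `Q = Πᵢ X`. As `Z - Wᵢ` vanishes on the
range of `Q` and `Wᵢ` on that of `1 - Q`, it follows that `Z - Wᵢ = (1 - Q)ᴴ Z (1 - Q) ≥ 0`.
-/

lemma exists_mul_eq_of_range_mulVecLin_le {R l m n : Type*} [CommSemiring R] [Fintype m]
    [Fintype n] {A : Matrix l m R} {B : Matrix l n R}
    (h : LinearMap.range B.mulVecLin ≤ LinearMap.range A.mulVecLin) : ∃ X, A * X = B := by
  classical
  have exists_mulVec_eq_col (j : n) : ∃ x, A *ᵥ x = B.col j :=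
    h ⟨Pi.single j 1, mulVec_single_one B j⟩
  choose x hx using exists_mulVec_eq_col
  exact ⟨of fun i j ↦ x j i, ext fun i j ↦ congrFun (hx j) i⟩

section Rank

variable {K ι l m n : Type*} [Field K] [Fintype m] [Fintype n]

lemma matrix_rank_add_le (A B : Matrix l n K) : (A + B).rank ≤ A.rank + B.rank := by
  have range_le : LinearMap.range (A + B).mulVecLin ≤
      LinearMap.range A.mulVecLin ⊔ LinearMap.range B.mulVecLin := by
    rw [mulVecLin_add]
    exact LinearMap.range_add_le _ _
  exact (Submodule.finrank_mono range_le).trans (Submodule.finrank_add_le_finrank_add_finrank _ _)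

lemma matrix_rank_sum_le (s : Finset ι) (A : ι → Matrix l n K) :
    (∑ i ∈ s, A i).rank ≤ ∑ i ∈ s, (A i).rank :=
  Finset.le_sum_of_subadditive _ rank_zero.le matrix_rank_add_le s A

lemma exists_mul_mul_eq_of_rank_le_rank_mul {A : Matrix l m K} {B : Matrix m n K}
    (h : A.rank ≤ (A * B).rank) : ∃ X, A * B * X = A := by
  have range_le : LinearMap.range (A * B).mulVecLin ≤ LinearMap.range A.mulVecLin := by
    rw [mulVecLin_mul]
    exact LinearMap.range_comp_le_range _ _
  exact exists_mul_eq_of_range_mulVecLin_le (Submodule.eq_of_le_of_finrank_le range_le h).ge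

lemma rank_mul_eq_left_of_sum_eq_one [Fintype ι] [DecidableEq n] {W P : ι → Matrix n n K}
    {Z : Matrix n n K} (hrank : ∑ i, (W i).rank ≤ Fintype.card n) (hP : ∑ i, P i = 1)
    (hZ : IsUnit Z.det) (hZP : ∀ i, Z * P i = W i * P i) (i : ι) :
    (W i * P i).rank = (W i).rank := by
  have rank_mul (j : ι) : (W j * P j).rank = (P j).rank := by
    rw [← hZP, rank_mul_eq_right_of_isUnit_det _ _ hZ]
  have rank_le (j : ι) (_ : j ∈ Finset.univ) : (W j * P j).rank ≤ (W j).rank :=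
    rank_mul_le_left _ _
  have sum_rank_le : ∑ j, (W j).rank ≤ ∑ j, (W j * P j).rank :=
    calc ∑ j, (W j).rank ≤ (∑ j, P j).rank := by rwa [hP, rank_one]
      _ ≤ ∑ j, (P j).rank := matrix_rank_sum_le _ _
      _ = ∑ j, (W j * P j).rank := by simp only [rank_mul]
  exact (Finset.sum_eq_sum_iff_of_le rank_le).mp
    ((Finset.sum_le_sum rank_le).antisymm sum_rank_le) i (Finset.mem_univ i)

end Rank

lemma posSemidef_sub_of_mul_eq {R n : Type*} [Ring R] [PartialOrder R] [StarRing R] [Fintype n]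
    {W Z Q : Matrix n n R} (hZ : Z.PosSemidef) (hW : W.IsHermitian) (hWQ : W * Q = W)
    (hZQ : Z * Q = W) : (Z - W).PosSemidef := by
  classical
  have hQW : Qᴴ * W = W := by rw [← hW.eq, ← conjTranspose_mul, hWQ]
  have hQZ : Qᴴ * Z = W := by rw [← hZ.isHermitian.eq, ← conjTranspose_mul, hZQ, hW.eq]
  have congruence : Z - W = (1 - Q)ᴴ * Z * (1 - Q) := by
    rw [conjTranspose_sub, conjTranspose_one, Matrix.mul_assoc, Matrix.mul_sub, Matrix.mul_one,
      hZQ, Matrix.sub_mul, Matrix.one_mul, Matrix.mul_sub, hQZ, hQW, sub_self, sub_zero]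
  rw [congruence]
  exact hZ.conjTranspose_mul_mul_same _

section Duality

variable {𝕜 ι n : Type*} [RCLike 𝕜] [Fintype ι] [Fintype n]

open scoped MatrixOrder in
lemma trace_mul_nonneg_of_posSemidef {A B : Matrix n n 𝕜} (hA : A.PosSemidef)
    (hB : B.PosSemidef) : 0 ≤ (A * B).trace := by
  classical
  obtain ⟨C, rfl⟩ := CStarAlgebra.nonneg_iff_eq_star_mul_self.mp hB.nonneg
  rw [star_eq_conjTranspose, ← Matrix.mul_assoc, trace_mul_comm, ← Matrix.mul_assoc]
  exact (hA.mul_mul_conjTranspose_same C).trace_nonneg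

variable [DecidableEq n]

lemma sum_trace_mul_le_trace {W E : ι → Matrix n n 𝕜} {Z : Matrix n n 𝕜}
    (hWZ : ∀ i, (Z - W i).PosSemidef) (hE : ∀ i, (E i).PosSemidef) (hE_sum : ∑ i, E i = 1) :
    ∑ i, (W i * E i).trace ≤ Z.trace := by
  have trace_le (i : ι) : (W i * E i).trace ≤ (Z * E i).trace := by
    rw [← sub_nonneg, ← trace_sub, ← Matrix.sub_mul]
    exact trace_mul_nonneg_of_posSemidef (hWZ i) (hE i)
  calc ∑ i, (W i * E i).trace ≤ ∑ i, (Z * E i).trace := Finset.sum_le_sum fun i _ ↦ trace_le i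
    _ = Z.trace := by rw [← trace_sum, ← Matrix.mul_sum, hE_sum, Matrix.mul_one]

lemma posSemidef_sub_of_sum_rank_le {W P : ι → Matrix n n 𝕜} {Z : Matrix n n 𝕜}
    (hW : ∀ i, (W i).IsHermitian) (hrank : ∑ i, (W i).rank ≤ Fintype.card n)
    (hP : ∑ i, P i = 1) (hZP : ∀ i, Z * P i = W i * P i) (hpos : Z.PosDef) (i : ι) :
    (Z - W i).PosSemidef := by
  have hZ_unit : IsUnit Z.det := (isUnit_iff_isUnit_det Z).mp hpos.isUnit
  obtain ⟨X, hX⟩ : ∃ X : Matrix n n 𝕜, W i * P i * X = W i :=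
    exists_mul_mul_eq_of_rank_le_rank_mul
      (rank_mul_eq_left_of_sum_eq_one hrank hP hZ_unit hZP i).ge
  have hWQ : W i * (P i * X) = W i := by rw [← Matrix.mul_assoc, hX]
  have hZQ : Z * (P i * X) = W i := by rw [← Matrix.mul_assoc, hZP, hX]
  exact posSemidef_sub_of_mul_eq hpos.posSemidef (hW i) hWQ hZQ

theorem stmt_8_general {W P : ι → Matrix n n 𝕜} {Z : Matrix n n 𝕜}
    (hW : ∀ i, (W i).IsHermitian) (hrank : ∑ i, (W i).rank ≤ Fintype.card n)
    (hP : ∑ i, P i = 1) (hZ : Z = ∑ k, W k * P k) (hZP : ∀ i, (Z - W i) * P i = 0)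
    (hpos : Z.PosDef) {E : ι → Matrix n n 𝕜} (hE : ∀ i, (E i).PosSemidef)
    (hE_sum : ∑ i, E i = 1) :
    ∑ i, (W i * E i).trace ≤ ∑ i, (W i * P i).trace := by
  have hZP_eq (i : ι) : Z * P i = W i * P i := by rw [← sub_eq_zero, ← Matrix.sub_mul, hZP]
  calc ∑ i, (W i * E i).trace ≤ Z.trace :=
        sum_trace_mul_le_trace (posSemidef_sub_of_sum_rank_le hW hrank hP hZP_eq hpos) hE hE_sum
    _ = ∑ i, (W i * P i).trace := by rw [hZ, trace_sum]

end Duality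

section Ensemble

variable {ι : Type} [Fintype ι] {n : ℕ} {p : ι → ℝ} {ρ : ι → Matrix (Fin n) (Fin n) ℂ}

lemma IsEnsemble.isHermitian_smul (h : IsEnsemble p ρ) (i : ι) :
    ((p i : ℂ) • ρ i).IsHermitian :=
  (h.2.2.1 i).isHermitian.smul (Complex.conj_ofReal (p i))

lemma IsLIEnsemble.sum_rank_smul (h : IsLIEnsemble p ρ) : ∑ i, ((p i : ℂ) • ρ i).rank = n := by
  have rank_smul (i : ι) : ((p i : ℂ) • ρ i).rank = (ρ i).rank :=
    rank_smul_of_mem_nonZeroDivisors _ <| mem_nonZeroDivisors_of_ne_zero <|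
      Complex.ofReal_ne_zero.mpr (h.1.1 i).ne'
  simpa only [rank_smul] using h.2.1

lemma succProb_eq_re_sum_trace (p : ι → ℝ) (ρ E : ι → Matrix (Fin n) (Fin n) ℂ) :
    succProb p ρ E = (∑ i, ((p i : ℂ) • ρ i * E i).trace).re := by
  simp only [succProb, Complex.re_sum, smul_mul, trace_smul, smul_eq_mul, Complex.re_ofReal_mul]

end Ensemble

/-- For an LI ensemble: if the POVM `P` satisfies the complementary slackness
conditions and `Z = ∑ pₖρₖΠₖ` is positive definite, then `P` is optimal. -/
theorem stmt_8 {m n : ℕ} (p : Fin m → ℝ) (ρ : Fin m → Matrix (Fin n) (Fin n) ℂ)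
    (hens : IsLIEnsemble p ρ)
    (P : Fin m → Matrix (Fin n) (Fin n) ℂ) (hP : IsPOVM P)
    (Z : Matrix (Fin n) (Fin n) ℂ) (hZ : Z = ∑ k, (p k : ℂ) • (ρ k * P k))
    (h1 : ∀ i, (Z - (p i : ℂ) • ρ i) * P i = 0)
    (h2 : ∀ i, P i * (Z - (p i : ℂ) • ρ i) = 0)
    (hpos : Z.PosDef) :
    ∀ E : Fin m → Matrix (Fin n) (Fin n) ℂ, IsPOVM E →
      succProb p ρ E ≤ succProb p ρ P := by
  intro E hE
  simp only [succProb_eq_re_sum_trace]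
  have trace_le := stmt_8_general hens.1.isHermitian_smul
    (hens.sum_rank_smul.trans (Fintype.card_fin n).symm).le hP.2
    (by simpa only [smul_mul] using hZ) h1 hpos hE.1 hE.2
  exact (Complex.le_def.mp trace_le).1
end
end

section
/- Let (q_i, σ_i)_{i=1}^m be a linearly independent (LI) ensemble on ℂ^n with r_i = rank σ_i. Then S = ∑_j q_jσ_j is positive definite, and the pretty good measurement elements Ω_i = S^{-1/2} q_iσ_i S^{-1/2} form a projective measurement with rank Ω_i = r_i for every i: Ω_iΩ_j = 0 for i ≠ j, Ω_i² = Ω_i = Ω_i*, and ∑_i Ω_i = I. -/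
open Matrix
open scoped ComplexOrder

noncomputable section

/-!
The conjugates `Ωᵢ = S^{-1/2} qᵢσᵢ S^{-1/2}` sum to `1` and keep the ranks of the `σᵢ`, so their
column spaces span the whole space and their dimensions add up to its dimension: they are
independent. Hence `∑ⱼ Ωⱼ (Ωᵢ v) = Ωᵢ v` is the unique decomposition of a vector already lying in
the `i`-th column space, which forces `Ωⱼ Ωᵢ = δᵢⱼ Ωᵢ`. Positive definiteness of `S` holds because
a vector killed by `S` is killed by every `σᵢ`, so it is orthogonal to all the column spaces.
-/

theorem rank_inv_mul_mul_inv {m n R : Type*} [Fintype m] [DecidableEq m] [Fintype n] [DecidableEq n]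
    [CommRing R] {B : Matrix m m R} {C : Matrix n n R} (hB : IsUnit B.det) (hC : IsUnit C.det)
    (A : Matrix m n R) : (B⁻¹ * A * C⁻¹).rank = A.rank := by
  rw [rank_mul_eq_left_of_isUnit_det _ _ (isUnit_nonsing_inv_det C hC),
    rank_mul_eq_right_of_isUnit_det _ _ (isUnit_nonsing_inv_det B hB)]

section CompleteOrthogonalIdempotents

variable {ι K R V M n : Type*} [Fintype ι]

theorem iSupIndep_of_iSup_eq_top_of_sum_finrank_le [DivisionRing K] [AddCommGroup V] [Module K V]
    [FiniteDimensional K V] {p : ι → Submodule K V} (hspan : ⨆ i, p i = ⊤)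
    (hdim : ∑ i, Module.finrank K (p i) ≤ Module.finrank K V) : iSupIndep p := by
  classical
  let sumMap : (Π₀ i, p i) →ₗ[K] V := DFinsupp.lsum ℕ fun i ↦ (p i).subtype
  have hsurj : Function.Surjective sumMap :=
    LinearMap.range_eq_top.mp ((Submodule.iSup_eq_range_dfinsupp_lsum p).symm.trans hspan)
  have hfinrank : Module.finrank K (Π₀ i, p i) = Module.finrank K V :=
    le_antisymm ((Module.finrank_directSum K fun i ↦ p i).trans_le hdim)
      (LinearMap.finrank_le_finrank_of_surjective hsurj)
  exact iSupIndep_of_dfinsupp_lsum_injective p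
    ((LinearMap.injective_iff_surjective_of_finrank_eq_finrank hfinrank).mpr hsurj)

theorem completeOrthogonalIdempotents_of_iSupIndep_range [Ring R] [AddCommGroup M] [Module R M]
    {f : ι → Module.End R M} (hsum : ∑ i, f i = 1)
    (hindep : iSupIndep fun i ↦ LinearMap.range (f i)) : CompleteOrthogonalIdempotents f := by
  classical
  have hdecomp (v : M) : ∑ j, f j v = v := by
    rw [← LinearMap.sum_apply, hsum, Module.End.one_apply]
  have happly (i : ι) (v : M) (j : ι) : f j (f i v) = if j = i then f i v else 0 := by
    have hmem (k : ι) : (if k = i then f i v else 0) ∈ LinearMap.range (f k) := by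
      split_ifs with hki
      · exact hki ▸ LinearMap.mem_range_self (f k) v
      · exact zero_mem _
    have hsums : ∑ k, f k (f i v) = ∑ k, if k = i then f i v else 0 := by
      rw [hdecomp, Finset.sum_ite_eq' Finset.univ i, if_pos (Finset.mem_univ i)]
    exact (iSupIndep_iff_finsetSum_eq_imp_eq _).mp hindep Finset.univ _ _
      (fun k _ ↦ ⟨LinearMap.mem_range_self (f k) _, hmem k⟩) hsums j (Finset.mem_univ j)
  exact
    { idem := fun i ↦ LinearMap.ext fun v ↦ (happly i v i).trans (if_pos rfl)
      ortho := fun j i hji ↦ LinearMap.ext fun v ↦ (happly i v j).trans (if_neg hji)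
      complete := hsum }

theorem completeOrthogonalIdempotents_of_sum_finrank_range_le [DivisionRing K] [AddCommGroup V]
    [Module K V] [FiniteDimensional K V] {f : ι → Module.End K V} (hsum : ∑ i, f i = 1)
    (hdim : ∑ i, Module.finrank K (LinearMap.range (f i)) ≤ Module.finrank K V) :
    CompleteOrthogonalIdempotents f := by
  have hspan : ⨆ i, LinearMap.range (f i) = ⊤ := by
    refine eq_top_iff.mpr fun v _ ↦ ?_
    rw [← Module.End.one_apply (R := K) v, ← hsum, LinearMap.sum_apply]
    exact Submodule.sum_mem_iSup fun i ↦ LinearMap.mem_range_self (f i) v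
  exact completeOrthogonalIdempotents_of_iSupIndep_range hsum
    (iSupIndep_of_iSup_eq_top_of_sum_finrank_le hspan hdim)

variable [Field K] [Fintype n] [DecidableEq n]

theorem completeOrthogonalIdempotents_of_sum_rank_le {P : ι → Matrix n n K} (hsum : ∑ i, P i = 1)
    (hrank : ∑ i, (P i).rank ≤ Fintype.card n) : CompleteOrthogonalIdempotents P := by
  let e : Matrix n n K →+* Module.End K (n → K) := RingHomClass.toRingHom toLinAlgEquiv'
  refine (CompleteOrthogonalIdempotents.map_injective_iff e toLinAlgEquiv'.injective).mp
    (completeOrthogonalIdempotents_of_sum_finrank_range_le (K := K) ?_ ?_)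
  · simpa only [Function.comp_apply, map_sum, map_one] using congrArg e hsum
  · exact hrank.trans_eq (Module.finrank_fintype_fun_eq_card K).symm

theorem completeOrthogonalIdempotents_inv_mul_mul_inv {A : ι → Matrix n n K} {B C : Matrix n n K}
    (hB : IsUnit B.det) (hC : IsUnit C.det) (hBC : B * C = ∑ i, A i)
    (hrank : ∑ i, (A i).rank ≤ Fintype.card n) :
    CompleteOrthogonalIdempotents fun i ↦ B⁻¹ * A i * C⁻¹ := by
  refine completeOrthogonalIdempotents_of_sum_rank_le ?_ ?_
  · rw [← Finset.sum_mul, ← Finset.mul_sum, ← hBC, nonsing_inv_mul_cancel_left _ _ hB,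
      mul_nonsing_inv _ hC]
  · simpa only [rank_inv_mul_mul_inv hB hC] using hrank

end CompleteOrthogonalIdempotents

section PosDef

variable {ι n 𝕜 : Type*} [Fintype n]

theorem eq_zero_of_iSup_range_eq_top_of_mulVec_eq_zero {R : Type*} [CommRing R] [PartialOrder R]
    [StarRing R] [StarOrderedRing R] [NoZeroDivisors R] {A : ι → Matrix n n R}
    (hA : ∀ i, (A i).IsHermitian) (hspan : ⨆ i, LinearMap.range (A i).mulVecLin = ⊤) {x : n → R}
    (hx : ∀ i, A i *ᵥ x = 0) : x = 0 := by
  have horth : ⨆ i, LinearMap.range (A i).mulVecLin ≤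
      LinearMap.ker (dotProductBilin R R (star x)) := by
    refine iSup_le fun i ↦ ?_
    rintro _ ⟨v, rfl⟩
    calc star x ⬝ᵥ A i *ᵥ v = star (A i *ᵥ x) ⬝ᵥ v := by
          rw [dotProduct_mulVec, star_mulVec, (hA i).eq]
      _ = 0 := by rw [hx, star_zero, zero_dotProduct]
  rw [hspan] at horth
  exact dotProduct_star_self_eq_zero.mp (horth (Submodule.mem_top (x := x)))

variable [Fintype ι] [RCLike 𝕜] {A : ι → Matrix n n 𝕜}

theorem mulVec_eq_zero_of_sum_mulVec_eq_zero (hA : ∀ i, (A i).PosSemidef) {x : n → 𝕜}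
    (hx : (∑ i, A i) *ᵥ x = 0) (i : ι) : A i *ᵥ x = 0 := by
  have hsum : ∑ j, star x ⬝ᵥ A j *ᵥ x = 0 := by
    rw [← dotProduct_sum, ← sum_mulVec, hx, dotProduct_zero]
  exact ((hA i).dotProduct_mulVec_zero_iff x).mp <|
    (Finset.sum_eq_zero_iff_of_nonneg fun j _ ↦ (hA j).dotProduct_mulVec_nonneg x).mp hsum i
      (Finset.mem_univ i)

theorem posDef_sum_of_iSup_range_eq_top (hA : ∀ i, (A i).PosSemidef)
    (hspan : ⨆ i, LinearMap.range (A i).mulVecLin = ⊤) : (∑ i, A i).PosDef := by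
  classical
  refine (posSemidef_sum _ fun i _ ↦ hA i).posDef_iff_isUnit.mpr (mulVec_injective_iff_isUnit.mp ?_)
  refine (injective_iff_map_eq_zero (∑ i, A i).mulVecLin).mpr fun x hx ↦ ?_
  exact eq_zero_of_iSup_range_eq_top_of_mulVec_eq_zero (fun i ↦ (hA i).isHermitian) hspan
    (mulVec_eq_zero_of_sum_mulVec_eq_zero hA hx)

end PosDef

theorem stmt_11_general {ι n 𝕜 : Type*} [Fintype ι] [Fintype n] [DecidableEq n] [RCLike 𝕜]
    {q : ι → 𝕜} {σ : ι → Matrix n n 𝕜} (hq : ∀ i, 0 < q i) (hσ : ∀ i, (σ i).PosSemidef)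
    (hrank : ∑ i, (σ i).rank ≤ Fintype.card n)
    (hspan : ⨆ i, LinearMap.range (σ i).mulVecLin = ⊤) :
    (∑ j, q j • σ j).PosDef ∧
    ∀ R : Matrix n n 𝕜, R.IsHermitian → R * R = ∑ j, q j • σ j →
      CompleteOrthogonalIdempotents (fun i ↦ R⁻¹ * (q i • σ i) * R⁻¹) ∧
      (∀ i, (R⁻¹ * (q i • σ i) * R⁻¹).IsHermitian) ∧
      ∀ i, (R⁻¹ * (q i • σ i) * R⁻¹).rank = (σ i).rank := by
  have hqσ (i : ι) : (q i • σ i).PosSemidef := (hσ i).smul (hq i).le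
  have hqσ_rank (i : ι) : (q i • σ i).rank = (σ i).rank :=
    rank_smul_of_mem_nonZeroDivisors _ (mem_nonZeroDivisors_of_ne_zero (hq i).ne')
  have hqσ_range (i : ι) :
      LinearMap.range (q i • σ i).mulVecLin = LinearMap.range (σ i).mulVecLin := by
    rw [← toLin'_apply', map_smul, toLin'_apply', LinearMap.range_smul _ _ (hq i).ne']
  have hS : (∑ j, q j • σ j).PosDef :=
    posDef_sum_of_iSup_range_eq_top hqσ (by simpa only [hqσ_range] using hspan)
  refine ⟨hS, fun R hR hRR ↦ ?_⟩
  have hR_unit : IsUnit R.det :=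
    isUnit_of_mul_isUnit_left (det_mul R R ▸ hRR ▸ (isUnit_iff_isUnit_det _).mp hS.isUnit)
  refine ⟨completeOrthogonalIdempotents_inv_mul_mul_inv hR_unit hR_unit hRR
    (by simpa only [hqσ_rank] using hrank), fun i ↦ ?_, fun i ↦ ?_⟩
  · simpa only [hR.inv.eq] using isHermitian_mul_mul_conjTranspose R⁻¹ (hqσ i).isHermitian
  · rw [rank_inv_mul_mul_inv hR_unit hR_unit, hqσ_rank]

/-- For an LI ensemble `(q, σ)`: `S = ∑ qⱼσⱼ` is positive definite, and the pretty good
measurement elements `Ωᵢ = S^{-1/2} qᵢσᵢ S^{-1/2}` form a projective measurement with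
`rank Ωᵢ = rank σᵢ` for every `i`. -/
theorem stmt_11 {m n : ℕ} (q : Fin m → ℝ) (σ : Fin m → Matrix (Fin n) (Fin n) ℂ)
    (hens : IsLIEnsemble q σ) :
    (∑ j, (q j : ℂ) • σ j).PosDef ∧
    ∀ R : Matrix (Fin n) (Fin n) ℂ, R.PosDef → R * R = ∑ j, (q j : ℂ) • σ j →
      (∀ i j, i ≠ j →
        (R⁻¹ * ((q i : ℂ) • σ i) * R⁻¹) * (R⁻¹ * ((q j : ℂ) • σ j) * R⁻¹) = 0) ∧
      (∀ i, (R⁻¹ * ((q i : ℂ) • σ i) * R⁻¹) * (R⁻¹ * ((q i : ℂ) • σ i) * R⁻¹) =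
        R⁻¹ * ((q i : ℂ) • σ i) * R⁻¹) ∧
      (∀ i, (R⁻¹ * ((q i : ℂ) • σ i) * R⁻¹).IsHermitian) ∧
      (∀ i, (R⁻¹ * ((q i : ℂ) • σ i) * R⁻¹).rank = (σ i).rank) ∧
      ∑ i, R⁻¹ * ((q i : ℂ) • σ i) * R⁻¹ = 1 := by
  obtain ⟨⟨hq, -, hσ, -⟩, hrank, hspan⟩ := hens
  obtain ⟨hS, hPGM⟩ := stmt_11_general (q := fun i ↦ (q i : ℂ)) (fun i ↦ mod_cast hq i) hσ
    (hrank.trans (Fintype.card_fin n).symm).le hspan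
  refine ⟨hS, fun R hR hRR ↦ ?_⟩
  obtain ⟨hΩ, hherm, hΩ_rank⟩ := hPGM R hR.isHermitian hRR
  exact ⟨fun i j hij ↦ hΩ.ortho hij, hΩ.idem, hherm, hΩ_rank, hΩ.complete⟩
end
end

section
/- Let x_1,…,x_n be a basis of ℂ^n, let Γ be its n×n Gram matrix with entries Γ_{jk} = ⟨x_j, x_k⟩ (inner product conjugate-linear in the first argument), let Γ^{1/2} be the unique positive definite square root of Γ, and let u_1,…,u_n be the dual basis determined by ⟨x_j, u_k⟩ = δ_{jk}. Then S = ∑_k x_k x_k* (sum of outer products) is positive definite and S^{-1/2} = ∑_{j,k} (Γ^{1/2})_{jk} u_j u_k*. -/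
open Matrix
open scoped ComplexOrder

noncomputable section

/-!
Collect the `x k` as the columns of `X` and the conjugates of the `u k` as the rows of `Y`, so that
`S = X * Xᴴ`, `Γ = Xᴴ * X`, `Y = X⁻¹` and the claimed formula reads `S^{-1/2} = Yᴴ * Γ^{1/2} * Y`.
Both sides are positive semidefinite and both square to `Yᴴ * Y`, the right-hand side because
`Y * Yᴴ = Γ⁻¹`; so they agree by uniqueness of positive semidefinite square roots.
-/

section Families

variable {ι κ l m α : Type*}

theorem sum_vecMulVec [Fintype ι] [NonUnitalNonAssocSemiring α] (v : ι → l → α)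
    (w : ι → m → α) : ∑ k, vecMulVec (v k) (w k) = (of v)ᵀ * of w := by
  ext i j
  exact Matrix.sum_apply i j _ _

theorem sum_sum_smul_vecMulVec [Fintype ι] [Fintype κ] [CommSemiring α] (A : Matrix ι κ α)
    (v : ι → l → α) (w : κ → m → α) :
    ∑ j, ∑ k, A j k • vecMulVec (v j) (w k) = (of v)ᵀ * A * of w := by
  have hrow (j : ι) : ∑ k, A j k • vecMulVec (v j) (w k) = vecMulVec (v j) ((A * of w).row j) := by
    ext
    simp only [Matrix.sum_apply, Matrix.smul_apply, smul_eq_mul, vecMulVec_apply, row_apply,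
      mul_apply, of_apply, Finset.mul_sum, mul_left_comm]
  simp_rw [hrow, sum_vecMulVec, Matrix.mul_assoc]
  rfl

theorem exists_transpose_of_mul_eq_one_iff_span_eq_top [Fintype ι] [Finite m] [DecidableEq m]
    [CommRing α] {v : ι → m → α} :
    (∃ B : Matrix ι m α, (of v)ᵀ * B = 1) ↔ Submodule.span α (Set.range v) = ⊤ := by
  rw [← mulVec_surjective_iff_exists_right_inverse, ← coe_mulVecLin, ← LinearMap.range_eq_top,
    range_mulVecLin]
  rfl

theorem conjTranspose_mul_eq_one_of_biorthogonal [DecidableEq ι] [Fintype m] [CommSemiring α]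
    [StarRing α] {x u : ι → m → α}
    (hu : ∀ j k, star (x j) ⬝ᵥ u k = if j = k then 1 else 0) :
    (of u)ᵀᴴ * (of x)ᵀ = 1 := by
  have h : (of x)ᵀᴴ * (of u)ᵀ = 1 := by
    ext j k
    exact (hu j k).trans one_apply.symm
  simpa only [conjTranspose_mul, conjTranspose_conjTranspose, conjTranspose_one] using
    congrArg conjTranspose h

theorem mul_conjTranspose_eq_one_of_biorthogonal [Fintype ι] [DecidableEq ι] [Fintype m]
    [DecidableEq m] [CommRing α] [StarRing α] {x u : ι → m → α}
    (hsp : Submodule.span α (Set.range x) = ⊤)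
    (hu : ∀ j k, star (x j) ⬝ᵥ u k = if j = k then 1 else 0) :
    (of x)ᵀ * (of u)ᵀᴴ = 1 := by
  obtain ⟨B, hB⟩ := exists_transpose_of_mul_eq_one_iff_span_eq_top.2 hsp
  have hB_eq : (of u)ᵀᴴ = B := by
    rw [← Matrix.mul_one (of u)ᵀᴴ, ← hB, ← Matrix.mul_assoc,
      conjTranspose_mul_eq_one_of_biorthogonal hu, Matrix.one_mul]
  rwa [hB_eq]

end Families

section RCLike

variable {𝕜 ι m : Type*} [RCLike 𝕜] [Fintype ι]

theorem posDef_sum_vecMulVec_star_of_span_eq_top [Finite m] {x : ι → m → 𝕜}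
    (hx : Submodule.span 𝕜 (Set.range x) = ⊤) :
    (∑ k, vecMulVec (x k) (star (x k))).PosDef := by
  classical
  have := Fintype.ofFinite m
  obtain ⟨B, hB⟩ := exists_transpose_of_mul_eq_one_iff_span_eq_top.2 hx
  rw [sum_vecMulVec]
  refine PosDef.mul_conjTranspose_self (of x)ᵀ (Function.LeftInverse.injective (g := (· ᵥ* B)) ?_)
  intro v
  simp only [vecMul_vecMul, hB, vecMul_one]

variable [Fintype m]

open scoped MatrixOrder in
theorem eq_of_mul_self_eq_mul_self_of_posSemidef {A B : Matrix m m 𝕜}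
    (hA : A.PosSemidef) (hB : B.PosSemidef) (h : A * A = B * B) : A = B := by
  classical
  exact (CFC.mul_self_eq_mul_self_iff A B hA.nonneg hB.nonneg).1 h

variable [DecidableEq ι] [DecidableEq m]

theorem inv_eq_conjTranspose_mul_mul_of_mul_self_eq {X : Matrix m ι 𝕜} {Y : Matrix ι m 𝕜}
    (hXY : X * Y = 1) (hYX : Y * X = 1) {P : Matrix m m 𝕜} {R : Matrix ι ι 𝕜}
    (hP : P.PosSemidef) (hPP : P * P = X * Xᴴ) (hR : R.PosSemidef) (hRR : R * R = Xᴴ * X) :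
    P⁻¹ = Yᴴ * R * Y := by
  have hXY' : Yᴴ * Xᴴ = 1 := by rw [← conjTranspose_mul, hXY, conjTranspose_one]
  have hYX' : Xᴴ * Yᴴ = 1 := by rw [← conjTranspose_mul, hYX, conjTranspose_one]
  have hP_inv : P⁻¹ * P⁻¹ = Yᴴ * Y := by
    rw [← Matrix.mul_inv_rev, hPP]
    refine inv_eq_right_inv ?_
    calc X * Xᴴ * (Yᴴ * Y) = X * (Xᴴ * Yᴴ) * Y := by simp only [Matrix.mul_assoc]
      _ = 1 := by rw [hYX', Matrix.mul_one, hXY]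
  have hR_inv : R * (Y * Yᴴ) * R = 1 := by
    rw [Matrix.mul_assoc, mul_eq_one_comm]
    calc Y * Yᴴ * R * R = Y * Yᴴ * (Xᴴ * X) := by rw [Matrix.mul_assoc, hRR]
      _ = Y * (Yᴴ * Xᴴ) * X := by simp only [Matrix.mul_assoc]
      _ = 1 := by rw [hXY', Matrix.mul_one, hYX]
  refine eq_of_mul_self_eq_mul_self_of_posSemidef hP.inv (hR.conjTranspose_mul_mul_same Y) ?_
  calc P⁻¹ * P⁻¹ = Yᴴ * (R * (Y * Yᴴ) * R) * Y := by rw [hP_inv, hR_inv, Matrix.mul_one]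
    _ = Yᴴ * R * Y * (Yᴴ * R * Y) := by simp only [Matrix.mul_assoc]

theorem stmt_12_general {x u : ι → m → 𝕜} (hsp : Submodule.span 𝕜 (Set.range x) = ⊤)
    (hu : ∀ j k, star (x j) ⬝ᵥ u k = if j = k then 1 else 0)
    {Γ : Matrix ι ι 𝕜} (hΓ : ∀ j k, Γ j k = star (x j) ⬝ᵥ x k) :
    (∑ k, vecMulVec (x k) (star (x k))).PosDef ∧
    ∀ (Rs : Matrix m m 𝕜) (RΓ : Matrix ι ι 𝕜),
      Rs.PosSemidef → Rs * Rs = ∑ k, vecMulVec (x k) (star (x k)) →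
      RΓ.PosSemidef → RΓ * RΓ = Γ →
      Rs⁻¹ = ∑ j, ∑ k, RΓ j k • vecMulVec (u j) (star (u k)) := by
  refine ⟨posDef_sum_vecMulVec_star_of_span_eq_top hsp, fun Rs RΓ hRs hRs_sq hRΓ hRΓ_sq => ?_⟩
  have hYX : (of u)ᵀᴴ * (of x)ᵀ = 1 := conjTranspose_mul_eq_one_of_biorthogonal hu
  have hXY : (of x)ᵀ * (of u)ᵀᴴ = 1 := mul_conjTranspose_eq_one_of_biorthogonal hsp hu
  have hΓ_eq : Γ = (of x)ᵀᴴ * (of x)ᵀ := Matrix.ext hΓ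
  have hS : Rs * Rs = (of x)ᵀ * (of x)ᵀᴴ := hRs_sq.trans (sum_vecMulVec x fun k => star (x k))
  rw [inv_eq_conjTranspose_mul_mul_of_mul_self_eq hXY hYX hRs hS hRΓ (hRΓ_sq.trans hΓ_eq),
    conjTranspose_conjTranspose, sum_sum_smul_vecMulVec]
  rfl

end RCLike

/-- For a basis `x₁, …, xₙ` of `ℂ^n` with Gram matrix `Γ` and dual basis `u₁, …, uₙ`:
`S = ∑ xₖxₖ*` is positive definite and `S^{-1/2} = ∑ (Γ^{1/2})ⱼₖ uⱼuₖ*`. -/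
theorem stmt_12 {n : ℕ} (x : Fin n → (Fin n → ℂ))
    (hli : LinearIndependent ℂ x) (hsp : Submodule.span ℂ (Set.range x) = ⊤)
    (u : Fin n → (Fin n → ℂ))
    (hu : ∀ j k, star (x j) ⬝ᵥ u k = if j = k then 1 else 0)
    (Γ : Matrix (Fin n) (Fin n) ℂ) (hΓ : ∀ j k, Γ j k = star (x j) ⬝ᵥ x k) :
    (∑ k, outer (x k)).PosDef ∧
    ∀ Rs RΓ : Matrix (Fin n) (Fin n) ℂ,
      Rs.PosDef → Rs * Rs = ∑ k, outer (x k) →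
      RΓ.PosDef → RΓ * RΓ = Γ →
      Rs⁻¹ = ∑ j, ∑ k, RΓ j k • Matrix.vecMulVec (u j) (star (u k)) :=
  let ⟨hS, hRoot⟩ := stmt_12_general hsp hu hΓ
  ⟨hS, fun Rs RΓ hRs hRs_sq hRΓ => hRoot Rs RΓ hRs.posSemidef hRs_sq hRΓ.posSemidef⟩
end
end

section
/- Let x_1,…,x_n be a basis of ℂ^n with Gram matrix Γ (Γ_{jk} = ⟨x_j, x_k⟩, conjugate-linear in the first argument), let Γ^{1/2} be the positive definite square root of Γ, let u_1,…,u_n be the dual basis (⟨x_j, u_k⟩ = δ_{jk}), and set S = ∑_k x_k x_k*. For a subset B ⊆ {1,…,n} let E_B be the diagonal 0–1 matrix with (E_B)_{kk} = 1 exactly when k ∈ B. Then S^{-1/2} (∑_{k∈B} x_k x_k*) S^{-1/2} = ∑_{a,b} (Γ^{1/2} E_B Γ^{1/2})_{ab} u_a u_b*. -/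
open Matrix
open scoped ComplexOrder

noncomputable section

/-!
Let `X` be the matrix with columns `xₖ`, so that `S = X Xᴴ` and `Γ = Xᴴ X`. Since `S X = X Γ`, the
positive square roots satisfy `S^{1/2} X = X Γ^{1/2}` as well. The dual family `U` satisfies
`S U = X`, hence `S^{-1/2} X = S^{-1} X Γ^{1/2} = U Γ^{1/2}`; conjugating `E_B` by this matrix gives
the formula. This covers every finite frame with its canonical dual frame `S^{-1} xₖ`, where `Γ` may
be singular; for a basis, biorthogonality gives `S uₖ = ∑ⱼ xⱼ ⟨xⱼ, uₖ⟩ = xₖ`.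
-/

section Intertwining

variable {𝕜 m ι : Type*} [RCLike 𝕜] [Fintype m] [Fintype ι]
  {A : Matrix m m 𝕜} {C : Matrix ι ι 𝕜} {X Y : Matrix m ι 𝕜}

open scoped MatrixOrder Matrix.Norms.L2Operator in
theorem mul_eq_zero_of_trace_conjTranspose_mul_mul_eq_zero (hA : A.PosSemidef)
    (h : (Yᴴ * A * Y).trace = 0) : A * Y = 0 := by
  classical
  obtain ⟨D, rfl⟩ : ∃ D : Matrix m m 𝕜, A = Dᴴ * D :=
    CStarAlgebra.nonneg_iff_eq_star_mul_self.mp hA.nonneg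
  have hDY : D * Y = 0 := by
    rw [← trace_conjTranspose_mul_self_eq_zero_iff, ← h, conjTranspose_mul]
    simp only [Matrix.mul_assoc]
  rw [Matrix.mul_assoc, hDY, Matrix.mul_zero]

theorem mul_eq_zero_of_mul_add_mul_eq_zero (hA : A.PosSemidef) (hC : C.PosSemidef)
    (h : A * Y + Y * C = 0) : A * Y = 0 := by
  have hsum : (Yᴴ * A * Y).trace + (Y * C * Yᴴ).trace = 0 := by
    rw [trace_mul_comm (Y * C), ← trace_add, Matrix.mul_assoc, ← Matrix.mul_add, h,
      Matrix.mul_zero, trace_zero]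
  have hleft : 0 ≤ (Yᴴ * A * Y).trace := (hA.conjTranspose_mul_mul_same Y).trace_nonneg
  have hright : 0 ≤ (Y * C * Yᴴ).trace := (hC.mul_mul_conjTranspose_same Y).trace_nonneg
  exact mul_eq_zero_of_trace_conjTranspose_mul_mul_eq_zero hA
    ((add_eq_zero_iff_of_nonneg hleft hright).mp hsum).1

theorem mul_eq_mul_of_mul_self_mul_eq_mul_mul_self (hA : A.PosSemidef) (hC : C.PosSemidef)
    (h : A * A * X = X * (C * C)) : A * X = X * C := by
  set Y := A * X - X * C with hY
  have hsylvester : A * Y + Y * C = 0 := by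
    rw [hY, Matrix.mul_sub, Matrix.sub_mul, ← Matrix.mul_assoc A A X, h]
    simp only [Matrix.mul_assoc]
    abel
  have hAY : A * Y = 0 := mul_eq_zero_of_mul_add_mul_eq_zero hA hC hsylvester
  have hYC : Y * C = 0 := by simpa only [hAY, zero_add] using hsylvester
  have hYA : Yᴴ * A = 0 := by
    simpa only [conjTranspose_mul, hA.isHermitian.eq, conjTranspose_zero] using
      congrArg conjTranspose hAY
  have hCY : C * Yᴴ = 0 := by
    simpa only [conjTranspose_mul, hC.isHermitian.eq, conjTranspose_zero] using
      congrArg conjTranspose hYC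
  have htrace : (Yᴴ * Y).trace = 0 := by
    calc (Yᴴ * Y).trace = (Yᴴ * A * X).trace - (C * Yᴴ * X).trace := by
          rw [Matrix.mul_assoc C, trace_mul_comm C, ← trace_sub, Matrix.mul_assoc,
            Matrix.mul_assoc, ← Matrix.mul_sub]
      _ = 0 := by simp only [hYA, hCY, Matrix.zero_mul, sub_self, trace_zero]
  exact sub_eq_zero.mp (trace_conjTranspose_mul_self_eq_zero_iff.mp htrace)

end Intertwining

section Synthesis

variable {R m ι : Type*}

/-- The synthesis matrix of a family of vectors: the matrix whose columns are its members. -/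
def synthesis (x : ι → m → R) : Matrix m ι R :=
  (Matrix.of x)ᵀ

variable [CommSemiring R] [StarRing R]

theorem conjTranspose_synthesis_mul_synthesis [Fintype m] (x y : ι → m → R) :
    (synthesis x)ᴴ * synthesis y = Matrix.of fun j k => star (x j) ⬝ᵥ y k :=
  rfl

theorem sum_smul_vecMulVec_star [Fintype ι] (x : ι → m → R) (M : Matrix ι ι R) :
    ∑ a, ∑ b, M a b • vecMulVec (x a) (star (x b)) = synthesis x * M * (synthesis x)ᴴ := by
  ext i j
  simp only [synthesis, mul_apply, Matrix.sum_apply, Matrix.smul_apply, vecMulVec_apply,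
    Pi.star_apply, conjTranspose_apply, transpose_apply, of_apply, smul_eq_mul, Finset.sum_mul]
  rw [Finset.sum_comm]
  exact Finset.sum_congr rfl fun b _ => Finset.sum_congr rfl fun a _ => by ring

theorem finset_sum_vecMulVec_star [Fintype ι] [DecidableEq ι] (x : ι → m → R) (B : Finset ι) :
    ∑ k ∈ B, vecMulVec (x k) (star (x k)) =
      synthesis x * diagonal (fun k => if k ∈ B then (1 : R) else 0) * (synthesis x)ᴴ := by
  rw [← sum_smul_vecMulVec_star]
  simp [diagonal_apply, ite_smul]

theorem sum_vecMulVec_star [Fintype ι] (x : ι → m → R) :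
    ∑ k, vecMulVec (x k) (star (x k)) = synthesis x * (synthesis x)ᴴ := by
  classical
  simpa using finset_sum_vecMulVec_star x Finset.univ

theorem sum_vecMulVec_star_mulVec_of_biorthogonal [Fintype m] [Fintype ι] [DecidableEq ι]
    {x u : ι → m → R} (hu : ∀ j k, star (x j) ⬝ᵥ u k = if j = k then 1 else 0) (k : ι) :
    (∑ j, vecMulVec (x j) (star (x j))) *ᵥ u k = x k := by
  simp [sum_mulVec, vecMulVec_mulVec, hu]

end Synthesis

theorem inv_sqrt_mul_eq_dual_mul_sqrt_gram {𝕜 m ι : Type*} [RCLike 𝕜] [Fintype m] [DecidableEq m]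
    [Fintype ι] {Rs : Matrix m m 𝕜} {R : Matrix ι ι 𝕜} {X U : Matrix m ι 𝕜}
    (hRs : Rs.PosDef) (hS : Rs * Rs = X * Xᴴ) (hR : R.PosSemidef) (hΓ : R * R = Xᴴ * X)
    (hU : X * Xᴴ * U = X) : Rs⁻¹ * X = U * R := by
  have hdet : IsUnit Rs.det := (isUnit_iff_isUnit_det Rs).mp hRs.isUnit
  have hintertwine : Rs * X = X * R :=
    mul_eq_mul_of_mul_self_mul_eq_mul_mul_self hRs.posSemidef hR (by
      rw [hS, hΓ, Matrix.mul_assoc])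
  have hU' : U = Rs⁻¹ * (Rs⁻¹ * X) := by
    rw [← hS, Matrix.mul_assoc] at hU
    rw [← hU, nonsing_inv_mul_cancel_left _ _ hdet, nonsing_inv_mul_cancel_left _ _ hdet]
  calc Rs⁻¹ * X = Rs⁻¹ * (Rs⁻¹ * (Rs * X)) := by rw [nonsing_inv_mul_cancel_left _ _ hdet]
    _ = U * R := by rw [hintertwine, hU']; simp only [Matrix.mul_assoc]

theorem stmt_13_general {𝕜 m ι : Type*} [RCLike 𝕜] [Fintype m] [DecidableEq m]
    [Fintype ι] [DecidableEq ι] {x u : ι → m → 𝕜}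
    (hu : ∀ k, (∑ j, vecMulVec (x j) (star (x j))) *ᵥ u k = x k)
    {Γ : Matrix ι ι 𝕜} (hΓ : ∀ j k, Γ j k = star (x j) ⬝ᵥ x k) (B : Finset ι)
    {Rs : Matrix m m 𝕜} {RΓ : Matrix ι ι 𝕜}
    (hRs : Rs.PosDef) (hS : Rs * Rs = ∑ k, vecMulVec (x k) (star (x k)))
    (hRΓ : RΓ.PosSemidef) (hRΓ_sq : RΓ * RΓ = Γ) :
    Rs⁻¹ * (∑ k ∈ B, vecMulVec (x k) (star (x k))) * Rs⁻¹ =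
      ∑ a, ∑ b, (RΓ * diagonal (fun k => if k ∈ B then (1 : 𝕜) else 0) * RΓ) a b
        • vecMulVec (u a) (star (u b)) := by
  rw [sum_vecMulVec_star] at hS
  have hgram : RΓ * RΓ = (synthesis x)ᴴ * synthesis x := by
    rw [hRΓ_sq, conjTranspose_synthesis_mul_synthesis]
    exact Matrix.ext hΓ
  have hdual : synthesis x * (synthesis x)ᴴ * synthesis u = synthesis x := by
    rw [← sum_vecMulVec_star]
    exact Matrix.ext fun i k => congrFun (hu k) i
  have hleft : Rs⁻¹ * synthesis x = synthesis u * RΓ :=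
    inv_sqrt_mul_eq_dual_mul_sqrt_gram hRs hS hRΓ hgram hdual
  have hright : (synthesis x)ᴴ * Rs⁻¹ = RΓ * (synthesis u)ᴴ := by
    simpa only [conjTranspose_mul, hRs.inv.isHermitian.eq, hRΓ.isHermitian.eq] using
      congrArg conjTranspose hleft
  rw [finset_sum_vecMulVec_star, sum_smul_vecMulVec_star]
  generalize diagonal (fun k => if k ∈ B then (1 : 𝕜) else 0) = E
  calc Rs⁻¹ * (synthesis x * E * (synthesis x)ᴴ) * Rs⁻¹
      = (Rs⁻¹ * synthesis x) * E * ((synthesis x)ᴴ * Rs⁻¹) := by simp only [Matrix.mul_assoc]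
    _ = synthesis u * (RΓ * E * RΓ) * (synthesis u)ᴴ := by
      rw [hleft, hright]
      simp only [Matrix.mul_assoc]

/-- For a basis `x₁, …, xₙ` of `ℂ^n` with Gram matrix `Γ`, dual basis `u₁, …, uₙ`,
`S = ∑ xₖxₖ*`, and a subset `B`:
`S^{-1/2} (∑_{k∈B} xₖxₖ*) S^{-1/2} = ∑_{a,b} (Γ^{1/2} E_B Γ^{1/2})_{ab} u_a u_b*`. -/
theorem stmt_13 {n : ℕ} (x : Fin n → (Fin n → ℂ))
    (hli : LinearIndependent ℂ x) (hsp : Submodule.span ℂ (Set.range x) = ⊤)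
    (u : Fin n → (Fin n → ℂ))
    (hu : ∀ j k, star (x j) ⬝ᵥ u k = if j = k then 1 else 0)
    (Γ : Matrix (Fin n) (Fin n) ℂ) (hΓ : ∀ j k, Γ j k = star (x j) ⬝ᵥ x k)
    (B : Finset (Fin n)) :
    ∀ Rs RΓ : Matrix (Fin n) (Fin n) ℂ,
      Rs.PosDef → Rs * Rs = ∑ k, outer (x k) →
      RΓ.PosDef → RΓ * RΓ = Γ →
      Rs⁻¹ * (∑ k ∈ B, outer (x k)) * Rs⁻¹ =
        ∑ a, ∑ b, (RΓ * Matrix.diagonal (fun k => if k ∈ B then (1 : ℂ) else 0) * RΓ) a b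
          • Matrix.vecMulVec (u a) (star (u b)) := by
  intro Rs RΓ hRs hS hRΓ hRΓ_sq
  exact stmt_13_general (sum_vecMulVec_star_mulVec_of_biorthogonal hu) hΓ B hRs hS hRΓ.posSemidef
    hRΓ_sq
end
end
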